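/- Let 0 < α < 1 and let C₀ > 0. Suppose K : 𝕋 × 𝕋 → ℂ is measurable on 𝕋 × 𝕋 ∖ {(w,w) : w ∈ 𝕋} and satisfies |K(w,τ)| ≤ C₀/|w−τ|^α for all w ≠ τ in 𝕋; suppose moreover that for each fixed τ ∈ 𝕋 the map θ ↦ K(e^{iθ}, τ) is differentiable at every θ with e^{iθ} ≠ τ, with derivative bounded by C₀/|e^{iθ}−τ|^{1+α}. Then there is a constant C_α depending only on α such that for every bounded measurable f : 𝕋 → ℂ, the function 𝒯f(w) = (1/(2πi)) ∫_{𝕋} K(w,τ) f(τ) dτ satisfies sup_{w∈𝕋} |𝒯f(w)| ≤ C_α C₀ ‖f‖_{L^∞(𝕋)} and |𝒯f(w₁) − 𝒯f(w₂)| ≤ C_α C₀ ‖f‖_{L^∞(𝕋)} |w₁ − w₂|^{1−α} for all w₁, w₂ ∈ 𝕋. -/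

import Mathlib

/-- Mean value of a function over the positively oriented unit circle:
`(1/(2πi)) ∫_𝕋 g(τ) dτ`. -/
noncomputable def circAvg (g : ℂ → ℂ) : ℂ :=
  (2 * (Real.pi : ℂ) * Complex.I)⁻¹ * ∮ τ in C(0, 1), g τ

open MeasureTheory Set Metric
open scoped NNReal ENNReal

/-! The kernel `K w` is integrated over `𝕋` against arc length, a measure whose ball of radius `r`
about a point of `𝕋` has mass at most `π r`. Decomposing into dyadic annuli turns this growth bound
into `∫_{|w-τ| ≤ r} |w-τ|^{-α} ≲ r^{1-α}` and `∫_{|w-τ| > r} |w-τ|^{-1-α} ≲ r^{-α}`; the first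
bound with `r = 2` controls `𝒯f`. If `w₁` and `w₂` are at angular distance `δ`, the size bound for
`K` is used at points within `2δ` of `w₁`, and the mean value inequality along the arc from `w₁` to
`w₂` everywhere else. Both contributions are of order `δ^{1-α}`. -/

section Growth

variable {X : Type*} [PseudoMetricSpace X] [MeasurableSpace X] {μ : Measure X}
  {A : ℝ≥0} {s α β q r t : ℝ} {x : X}

/-- Upper Ahlfors regularity of dimension `s` at the single point `x`: balls about `x` have measure
at most `A r ^ s`. This is the only property of arc length that the integral estimates need. -/
def HasGrowthAt (μ : Measure X) (A : ℝ≥0) (s : ℝ) (x : X) : Prop :=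
  ∀ r : ℝ, 0 < r → μ (closedBall x r) ≤ ENNReal.ofReal (A * r ^ s)

/-- The factor in front of `t ^ (s - α)` when `dist x · ^ (-α)` is integrated over the annuli
`t q ^ n ≤ dist x · ≤ 2 t q ^ n`, `n ∈ ℕ`, each of which contributes at most
`A (2 t q ^ n) ^ s (t q ^ n) ^ (-α)`. It is meaningful for `q ^ (s - α) < 1`. -/
noncomputable def annulusConst (A : ℝ≥0) (s α q : ℝ) : ℝ :=
  A * 2 ^ s / (1 - q ^ (s - α))

lemma annulusConst_nonneg (hq : q ^ (s - α) ≤ 1) : 0 ≤ annulusConst A s α q :=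
  div_nonneg (by positivity) (sub_nonneg.2 hq)

lemma annulusConst_pos (hA : 0 < A) (hq : q ^ (s - α) < 1) : 0 < annulusConst A s α q :=
  div_pos (by positivity) (sub_pos.2 hq)

lemma hasSum_annuli (A : ℝ≥0) (s α : ℝ) (ht : 0 < t) (hq₀ : 0 < q) (hq : q ^ (s - α) < 1) :
    HasSum (fun n : ℕ ↦ A * (2 * (t * q ^ n)) ^ s * (t * q ^ n) ^ (-α))
      (annulusConst A s α q * t ^ (s - α)) := by
  convert! (hasSum_geometric_of_lt_one (by positivity) hq).mul_left (A * 2 ^ s * t ^ (s - α))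
    using 1
  · funext n
    have hn : 0 < t * q ^ n := by positivity
    rw [Real.mul_rpow zero_le_two hn.le, mul_assoc, mul_assoc, ← Real.rpow_add hn, ← sub_eq_add_neg,
      Real.mul_rpow ht.le (by positivity), ← Real.rpow_pow_comm hq₀.le]
    ring
  · rw [annulusConst, div_eq_mul_inv]
    ring

variable [OpensMeasurableSpace X]

lemma HasGrowthAt.setLIntegral_dist_rpow_neg_le_of_annuli (hμ : HasGrowthAt μ A s x) (hα : 0 < α)
    (ht : 0 < t) (hq₀ : 0 < q) (hq : q ^ (s - α) < 1) {S : Set X} (hS : MeasurableSet S)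
    (hSq : ∀ y ∈ S, 0 < dist x y → ∃ n : ℕ, t * q ^ n ≤ dist x y ∧ dist x y ≤ 2 * (t * q ^ n)) :
    ∫⁻ y in S, ENNReal.ofReal (dist x y ^ (-α)) ∂μ ≤
      ENNReal.ofReal (annulusConst A s α q * t ^ (s - α)) := by
  set B : ℕ → Set X := fun n ↦ closedBall x (2 * (t * q ^ n)) with hB
  set c : ℕ → ℝ≥0∞ := fun n ↦ ENNReal.ofReal ((t * q ^ n) ^ (-α))
  have pointwise : ∀ y ∈ S,
      ENNReal.ofReal (dist x y ^ (-α)) ≤ ∑' n, (B n).indicator (fun _ ↦ c n) y := by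
    intro y hy
    rcases dist_nonneg.eq_or_lt' (a := dist x y) with h₀ | h₀
    · simp [h₀, Real.zero_rpow (neg_ne_zero.2 hα.ne')]
    obtain ⟨n, hn, hn'⟩ := hSq y hy h₀
    refine le_trans ?_ (ENNReal.le_tsum n)
    rw [indicator_of_mem (by rwa [hB, mem_closedBall'])]
    exact ENNReal.ofReal_le_ofReal
      (Real.rpow_le_rpow_of_nonpos (by positivity) hn (neg_nonpos.2 hα.le))
  calc ∫⁻ y in S, ENNReal.ofReal (dist x y ^ (-α)) ∂μ
      ≤ ∫⁻ y in S, ∑' n, (B n).indicator (fun _ ↦ c n) y ∂μ := setLIntegral_mono' hS pointwise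
    _ ≤ ∫⁻ y, ∑' n, (B n).indicator (fun _ ↦ c n) y ∂μ := setLIntegral_le_lintegral _ _
    _ = ∑' n, c n * μ (B n) := by
        rw [lintegral_tsum fun n ↦
          (measurable_const.indicator measurableSet_closedBall).aemeasurable]
        simp only [hB, lintegral_indicator_const measurableSet_closedBall]
    _ ≤ ∑' n : ℕ, ENNReal.ofReal (A * (2 * (t * q ^ n)) ^ s * (t * q ^ n) ^ (-α)) := by
        refine ENNReal.tsum_le_tsum fun n ↦ ?_
        rw [ENNReal.ofReal_mul (by positivity), mul_comm]
        exact mul_le_mul_left (hμ _ (by positivity)) _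
    _ = ENNReal.ofReal (annulusConst A s α q * t ^ (s - α)) := by
        have hsum := hasSum_annuli A s α ht hq₀ hq
        rw [← hsum.tsum_eq, ENNReal.ofReal_tsum_of_nonneg (fun n ↦ by positivity) hsum.summable]

lemma HasGrowthAt.setLIntegral_closedBall_dist_rpow_neg_le (hμ : HasGrowthAt μ A s x) (hα : 0 < α)
    (hαs : α < s) (hr : 0 < r) :
    ∫⁻ y in closedBall x r, ENNReal.ofReal (dist x y ^ (-α)) ∂μ ≤
      ENNReal.ofReal (annulusConst A s α (1 / 2) * (r / 2) ^ (s - α)) := by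
  refine hμ.setLIntegral_dist_rpow_neg_le_of_annuli hα (half_pos hr) one_half_pos
    (Real.rpow_lt_one (by norm_num) (by norm_num) (sub_pos.2 hαs)) measurableSet_closedBall
    fun y hy hy₀ ↦ ?_
  rw [mem_closedBall'] at hy
  obtain ⟨n, hn, hn'⟩ := exists_nat_pow_near_of_lt_one (div_pos hy₀ hr) ((div_le_one hr).2 hy)
    one_half_pos (one_half_lt_one (α := ℝ))
  rw [lt_div_iff₀ hr, pow_succ] at hn
  rw [div_le_iff₀ hr] at hn'
  exact ⟨n, by linarith, by linarith⟩

lemma HasGrowthAt.setLIntegral_compl_closedBall_dist_rpow_neg_le (hμ : HasGrowthAt μ A s x)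
    (hβ : 0 < β) (hsβ : s < β) (hr : 0 < r) :
    ∫⁻ y in (closedBall x r)ᶜ, ENNReal.ofReal (dist x y ^ (-β)) ∂μ ≤
      ENNReal.ofReal (annulusConst A s β 2 * r ^ (s - β)) := by
  refine hμ.setLIntegral_dist_rpow_neg_le_of_annuli hβ hr two_pos
    (Real.rpow_lt_one_of_one_lt_of_neg one_lt_two (sub_neg.2 hsβ)) measurableSet_closedBall.compl
    fun y hy _ ↦ ?_
  rw [mem_compl_iff, mem_closedBall', not_le] at hy
  obtain ⟨n, hn, hn'⟩ := exists_nat_pow_near ((one_le_div hr).2 hy.le) one_lt_two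
  rw [le_div_iff₀ hr] at hn
  rw [div_lt_iff₀ hr, pow_succ] at hn'
  exact ⟨n, by linarith, by linarith⟩

end Growth

section SingularFunctions

lemma setLIntegral_enorm_le_of_norm_le_mul {X E : Type*} [MeasurableSpace X]
    [SeminormedAddCommGroup E] {μ : Measure X} {k : X → E} {g : X → ℝ} {S : Set X} {C I : ℝ}
    (hC : 0 ≤ C) (hS : MeasurableSet S)
    (hk : ∀ᵐ y ∂μ, y ∈ S → ‖k y‖ ≤ C * g y)
    (hg : ∫⁻ y in S, ENNReal.ofReal (g y) ∂μ ≤ ENNReal.ofReal I) :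
    ∫⁻ y in S, ‖k y‖ₑ ∂μ ≤ ENNReal.ofReal (C * I) := by
  calc ∫⁻ y in S, ‖k y‖ₑ ∂μ
      ≤ ∫⁻ y in S, ENNReal.ofReal C * ENNReal.ofReal (g y) ∂μ := by
        refine setLIntegral_mono_ae' hS (hk.mono fun y hy hyS ↦ ?_)
        rw [← ENNReal.ofReal_mul hC, ← ofReal_norm]
        exact ENNReal.ofReal_le_ofReal (hy hyS)
    _ = ENNReal.ofReal C * ∫⁻ y in S, ENNReal.ofReal (g y) ∂μ :=
        lintegral_const_mul' _ _ ENNReal.ofReal_ne_top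
    _ ≤ ENNReal.ofReal (C * I) := by
        rw [ENNReal.ofReal_mul hC]
        gcongr

variable {X E : Type*} [PseudoMetricSpace X] [MeasurableSpace X] [OpensMeasurableSpace X]
  [SeminormedAddCommGroup E] {μ : Measure X} {A : ℝ≥0} {s α β C D r δ : ℝ}
  {x x' : X} {k k' : X → E}

lemma HasGrowthAt.setLIntegral_closedBall_enorm_le (hμ : HasGrowthAt μ A s x) (hα : 0 < α)
    (hαs : α < s) (hr : 0 < r) (hC : 0 ≤ C) (hk : ∀ᵐ y ∂μ, ‖k y‖ ≤ C * dist x y ^ (-α)) :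
    ∫⁻ y in closedBall x r, ‖k y‖ₑ ∂μ ≤
      ENNReal.ofReal (C * (annulusConst A s α (1 / 2) * (r / 2) ^ (s - α))) :=
  setLIntegral_enorm_le_of_norm_le_mul hC measurableSet_closedBall (hk.mono fun _ h _ ↦ h)
    (hμ.setLIntegral_closedBall_dist_rpow_neg_le hα hαs hr)

lemma HasGrowthAt.setLIntegral_closedBall_enorm_sub_le (hμ : HasGrowthAt μ A s x)
    (hμ' : HasGrowthAt μ A s x') (hα : 0 < α) (hαs : α < s) (hδ : 0 < δ) (hx : dist x x' ≤ δ)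
    (hC : 0 ≤ C) (hkm : AEStronglyMeasurable k μ) (hk : ∀ᵐ y ∂μ, ‖k y‖ ≤ C * dist x y ^ (-α))
    (hk' : ∀ᵐ y ∂μ, ‖k' y‖ ≤ C * dist x' y ^ (-α)) :
    ∫⁻ y in closedBall x (2 * δ), ‖k y - k' y‖ₑ ∂μ ≤
      ENNReal.ofReal
        (C * (annulusConst A s α (1 / 2) * (1 + (3 / 2) ^ (s - α)) * δ ^ (s - α))) := by
  have hN : 0 ≤ annulusConst A s α (1 / 2) :=
    annulusConst_nonneg (Real.rpow_le_one (by norm_num) (by norm_num) (sub_pos.2 hαs).le)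
  have hball : closedBall x (2 * δ) ⊆ closedBall x' (3 * δ) :=
    closedBall_subset_closedBall' (by linarith)
  calc ∫⁻ y in closedBall x (2 * δ), ‖k y - k' y‖ₑ ∂μ
      ≤ ∫⁻ y in closedBall x (2 * δ), (‖k y‖ₑ + ‖k' y‖ₑ) ∂μ := lintegral_mono fun y ↦ enorm_sub_le
    _ = ∫⁻ y in closedBall x (2 * δ), ‖k y‖ₑ ∂μ + ∫⁻ y in closedBall x (2 * δ), ‖k' y‖ₑ ∂μ :=
        lintegral_add_left' hkm.enorm.restrict _
    _ ≤ ∫⁻ y in closedBall x (2 * δ), ‖k y‖ₑ ∂μ + ∫⁻ y in closedBall x' (3 * δ), ‖k' y‖ₑ ∂μ := by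
        gcongr
    _ ≤ ENNReal.ofReal (C * (annulusConst A s α (1 / 2) * (2 * δ / 2) ^ (s - α))) +
          ENNReal.ofReal (C * (annulusConst A s α (1 / 2) * (3 * δ / 2) ^ (s - α))) := by
        gcongr
        · exact hμ.setLIntegral_closedBall_enorm_le hα hαs (by positivity) hC hk
        · exact hμ'.setLIntegral_closedBall_enorm_le hα hαs (by positivity) hC hk'
    _ = ENNReal.ofReal
          (C * (annulusConst A s α (1 / 2) * (1 + (3 / 2) ^ (s - α)) * δ ^ (s - α))) := by
        rw [← ENNReal.ofReal_add (by positivity) (by positivity),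
          mul_div_cancel_left₀ δ two_ne_zero, mul_div_right_comm, Real.mul_rpow (by norm_num) hδ.le]
        congr 1
        ring

lemma HasGrowthAt.lintegral_enorm_sub_le (hμ : HasGrowthAt μ A s x) (hμ' : HasGrowthAt μ A s x')
    (hα : 0 < α) (hαs : α < s) (hsβ : s < β) (hδ : 0 < δ) (hx : dist x x' ≤ δ)
    (hC : 0 ≤ C) (hD : 0 ≤ D) (hkm : AEStronglyMeasurable k μ)
    (hk : ∀ᵐ y ∂μ, ‖k y‖ ≤ C * dist x y ^ (-α)) (hk' : ∀ᵐ y ∂μ, ‖k' y‖ ≤ C * dist x' y ^ (-α))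
    (hkk' : ∀ᵐ y ∂μ, 2 * δ < dist x y → ‖k y - k' y‖ ≤ D * dist x y ^ (-β)) :
    ∫⁻ y, ‖k y - k' y‖ₑ ∂μ ≤ ENNReal.ofReal
      (C * (annulusConst A s α (1 / 2) * (1 + (3 / 2) ^ (s - α)) * δ ^ (s - α)) +
        D * (annulusConst A s β 2 * (2 * δ) ^ (s - β))) := by
  have hN : 0 ≤ annulusConst A s α (1 / 2) :=
    annulusConst_nonneg (Real.rpow_le_one (by norm_num) (by norm_num) (sub_pos.2 hαs).le)
  have hF : 0 ≤ annulusConst A s β 2 :=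
    annulusConst_nonneg (Real.rpow_le_one_of_one_le_of_nonpos one_le_two (sub_neg.2 hsβ).le)
  rw [← lintegral_add_compl _ (measurableSet_closedBall (x := x) (ε := 2 * δ)),
    ENNReal.ofReal_add (by positivity) (by positivity)]
  gcongr
  · exact hμ.setLIntegral_closedBall_enorm_sub_le hμ' hα hαs hδ hx hC hkm hk hk'
  · refine setLIntegral_enorm_le_of_norm_le_mul hD measurableSet_closedBall.compl
      (hkk'.mono fun y hy hy' ↦ hy ?_)
      (hμ.setLIntegral_compl_closedBall_dist_rpow_neg_le (by linarith) hsβ (by positivity))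
    rwa [mem_compl_iff, mem_closedBall', not_le] at hy'

end SingularFunctions

section CircleMap

lemma dist_circleMap_circleMap (c : ℂ) (R a b : ℝ) :
    dist (circleMap c R a) (circleMap c R b) = 2 * |R| * |Real.sin ((a - b) / 2)| := by
  have hfactor : circleMap c R a - circleMap c R b =
      circleMap 0 R b * (Complex.exp (Complex.I * ((a - b : ℝ) : ℂ)) - 1) := by
    simp only [circleMap, add_sub_add_left_eq_sub, zero_add, mul_sub, mul_assoc, mul_one,
      ← Complex.exp_add]
    push_cast
    ring_nf
  rw [dist_eq_norm, hfactor, norm_mul, norm_circleMap_zero,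
    Complex.norm_exp_I_mul_ofReal_sub_one, norm_mul, Real.norm_ofNat, Real.norm_eq_abs]
  ring

lemma dist_circleMap_le (c : ℂ) (R a b : ℝ) :
    dist (circleMap c R a) (circleMap c R b) ≤ |R| * |a - b| := by
  simpa [Real.dist_eq] using (lipschitzWith_circleMap c R).dist_le_mul a b

lemma abs_mul_abs_sub_le_dist_circleMap (c : ℂ) (R : ℝ) {a b : ℝ} (hab : |a - b| ≤ Real.pi) :
    |R| * |a - b| ≤ Real.pi / 2 * dist (circleMap c R a) (circleMap c R b) := by
  have habs : |(a - b) / 2| = |a - b| / 2 := by rw [abs_div, abs_two]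
  have hJordan := Real.mul_abs_le_abs_sin (x := (a - b) / 2) (by linarith)
  have hangle : |a - b| ≤ Real.pi * |Real.sin ((a - b) / 2)| := by
    rw [habs, div_mul_div_cancel₀' two_ne_zero, div_le_iff₀ Real.pi_pos] at hJordan
    linarith
  rw [dist_circleMap_circleMap]
  nlinarith [abs_nonneg R]

lemma exists_circleMap_eq_circleMap_eq (c : ℂ) {R : ℝ} {w₁ w₂ : ℂ} (h₁ : w₁ ∈ sphere c |R|)
    (h₂ : w₂ ∈ sphere c |R|) :
    ∃ a b : ℝ, circleMap c R a = w₁ ∧ circleMap c R b = w₂ ∧ |a - b| ≤ Real.pi := by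
  rw [← range_circleMap] at h₁
  obtain ⟨a, rfl⟩ := h₁
  rw [← range_circleMap,
    ← (periodic_circleMap c R).image_Ioc Real.two_pi_pos (a - Real.pi)] at h₂
  obtain ⟨b, hb, rfl⟩ := h₂
  exact ⟨a, b, rfl, rfl, abs_le.2 ⟨by linarith [hb.2], by linarith [hb.1]⟩⟩

lemma norm_sub_le_of_deriv_le_dist_circleMap_rpow {E : Type*} [NormedAddCommGroup E]
    [NormedSpace ℝ E] {u : ℝ → E} {τ : ℂ} {C β a b : ℝ} (hC : 0 ≤ C) (hβ : 0 ≤ β)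
    (hu : ∀ θ : ℝ, circleMap 0 1 θ ≠ τ →
      ∃ d : E, HasDerivAt u d θ ∧ ‖d‖ ≤ C / dist (circleMap 0 1 θ) τ ^ β)
    (hτ : circleMap 0 1 a ≠ τ) (hab : 2 * |a - b| ≤ dist (circleMap 0 1 a) τ) :
    ‖u a - u b‖ ≤ 2 ^ β * C * |a - b| * dist (circleMap 0 1 a) τ ^ (-β) := by
  set ρ := dist (circleMap 0 1 a) τ
  have hρ : 0 < ρ := dist_pos.2 hτ
  -- The arc from angle `a` to angle `b` is too short to come closer than `ρ / 2` to `τ`.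
  have hfar : ∀ θ ∈ uIcc a b, ρ / 2 ≤ dist (circleMap 0 1 θ) τ := by
    intro θ hθ
    have htri : ρ ≤ dist (circleMap 0 1 a) (circleMap 0 1 θ) + dist (circleMap 0 1 θ) τ :=
      dist_triangle _ _ _
    have harc := dist_circleMap_le 0 1 a θ
    have hθab := abs_sub_left_of_mem_uIcc hθ
    rw [abs_one, one_mul, abs_sub_comm] at harc
    rw [abs_sub_comm b a] at hθab
    linarith
  have hderiv : ∀ θ ∈ uIcc a b, ∃ d : E, HasDerivAt u d θ ∧ ‖d‖ ≤ C / (ρ / 2) ^ β := by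
    intro θ hθ
    have hθτ := hfar θ hθ
    obtain ⟨d, hd, hd'⟩ := hu θ (dist_pos.1 (by linarith))
    exact ⟨d, hd, hd'.trans (by gcongr)⟩
  have hmean : ‖u a - u b‖ ≤ C / (ρ / 2) ^ β * ‖a - b‖ := by
    refine (convex_uIcc a b).norm_image_sub_le_of_norm_deriv_le (fun θ hθ ↦ ?_) (fun θ hθ ↦ ?_)
      right_mem_uIcc left_mem_uIcc
    · obtain ⟨d, hd, -⟩ := hderiv θ hθ
      exact hd.differentiableAt
    · obtain ⟨d, hd, hd'⟩ := hderiv θ hθ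
      rwa [hd.deriv]
  refine hmean.trans_eq ?_
  rw [Real.div_rpow hρ.le zero_le_two, Real.rpow_neg hρ.le, Real.norm_eq_abs]
  field_simp

end CircleMap

section ArcLength

/-- Arc length on the unit circle, as a measure on `ℂ`. -/
noncomputable def arcLength : Measure ℂ :=
  (volume.restrict (Ioc 0 (2 * Real.pi))).map (circleMap 0 1)

lemma arcLength_eq_map_restrict_Ioc (a : ℝ) :
    arcLength = (volume.restrict (Ioc a (a + 2 * Real.pi))).map (circleMap 0 1) := by
  have : Fact (0 < 2 * Real.pi) := ⟨Real.two_pi_pos⟩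
  set F : AddCircle (2 * Real.pi) → ℂ := (periodic_circleMap 0 1).lift
  have hF : Continuous F := (continuous_circleMap 0 1).quotient_liftOn' _
  have hmap (b : ℝ) : (volume.restrict (Ioc b (b + 2 * Real.pi))).map (circleMap 0 1) =
      (volume : Measure (AddCircle (2 * Real.pi))).map F := by
    have hmk := AddCircle.measurePreserving_mk (2 * Real.pi) b
    rw [← hmk.map_eq, Measure.map_map hF.measurable hmk.measurable]
    rfl
  rw [hmap a, ← hmap 0, zero_add, arcLength]

lemma ae_arcLength_norm_eq_one : ∀ᵐ τ ∂arcLength, ‖τ‖ = 1 := by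
  rw [arcLength, ae_map_iff (measurable_circleMap 0 1).aemeasurable
    (measurableSet_eq_fun measurable_norm measurable_const)]
  exact .of_forall fun θ ↦ by simp

lemma ae_arcLength_ne (w : ℂ) : ∀ᵐ τ ∂arcLength, w ≠ τ := by
  have hmeas : MeasurableSet {τ | w ≠ τ} :=
    (measurableSet_eq_fun measurable_const measurable_id).compl
  refine (ae_map_iff (measurable_circleMap 0 1).aemeasurable hmeas).2 (ae_restrict_of_ae ?_)
  filter_upwards [((countable_singleton w).preimage_circleMap 0 one_ne_zero).ae_notMem volume]
    with θ hθ hw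
  exact hθ hw.symm

lemma hasGrowthAt_arcLength {w : ℂ} (hw : ‖w‖ = 1) : HasGrowthAt arcLength NNReal.pi 1 w := by
  intro r _
  obtain ⟨a, -, rfl, -, -⟩ := exists_circleMap_eq_circleMap_eq 0 (R := 1) (w₁ := w) (w₂ := w)
    (by simpa using hw) (by simpa using hw)
  have hpreimage : circleMap 0 1 ⁻¹' closedBall (circleMap 0 1 a) r ∩
      Ioc (a - Real.pi) (a - Real.pi + 2 * Real.pi) ⊆ closedBall a (Real.pi / 2 * r) := by
    rintro θ ⟨hθ, hθ₁, hθ₂⟩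
    rw [mem_preimage, mem_closedBall] at hθ
    have hangle := abs_mul_abs_sub_le_dist_circleMap 0 1 (a := θ) (b := a)
      (abs_le.2 ⟨by linarith, by linarith⟩)
    rw [abs_one, one_mul] at hangle
    rw [mem_closedBall, Real.dist_eq]
    exact hangle.trans (by gcongr)
  rw [arcLength_eq_map_restrict_Ioc (a - Real.pi),
    Measure.map_apply (measurable_circleMap 0 1) measurableSet_closedBall,
    Measure.restrict_apply (measurable_circleMap 0 1 measurableSet_closedBall)]
  refine (measure_mono hpreimage).trans_eq ?_
  rw [Real.volume_closedBall, NNReal.coe_real_pi, Real.rpow_one]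
  congr 1
  ring

lemma circleIntegrable_of_integrable_arcLength {g : ℂ → ℂ} (hg : Integrable g arcLength) :
    CircleIntegrable g 0 1 := by
  rw [circleIntegrable_def, intervalIntegrable_iff_integrableOn_Ioc_of_le Real.two_pi_pos.le]
  exact hg.comp_measurable (measurable_circleMap 0 1)

lemma circAvg_sub {g h : ℂ → ℂ} (hg : CircleIntegrable g 0 1) (hh : CircleIntegrable h 0 1) :
    circAvg (fun τ ↦ g τ - h τ) = circAvg g - circAvg h := by
  rw [circAvg, circAvg, circAvg, circleIntegral.integral_sub hg hh, mul_sub]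

lemma enorm_circAvg_le_lintegral {g : ℂ → ℂ} (hg : AEStronglyMeasurable g arcLength) :
    ‖circAvg g‖ₑ ≤ ∫⁻ τ, ‖g τ‖ₑ ∂arcLength := by
  have hconst : ‖(2 * (Real.pi : ℂ) * Complex.I)⁻¹‖ₑ ≤ 1 := by
    rw [← enorm_one (G := ℂ), enorm_le_iff_norm_le, norm_inv, norm_one]
    refine inv_le_one_of_one_le₀ ?_
    rw [norm_mul, norm_mul, Complex.norm_I, Complex.norm_real, Complex.norm_ofNat, mul_one,
      Real.norm_of_nonneg Real.pi_pos.le]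
    linarith [Real.pi_gt_three]
  have htangent (θ : ℝ) :
      ‖deriv (circleMap 0 1) θ • g (circleMap 0 1 θ)‖ₑ = ‖g (circleMap 0 1 θ)‖ₑ := by
    rw [← ofReal_norm, ← ofReal_norm, norm_smul, deriv_circleMap, norm_mul, norm_circleMap_zero,
      Complex.norm_I, abs_one, one_mul, one_mul]
  calc ‖circAvg g‖ₑ
      ≤ ‖∮ τ in C(0, 1), g τ‖ₑ := by
        rw [circAvg, enorm_mul]
        exact mul_le_of_le_one_left' hconst
    _ ≤ ∫⁻ θ in Ioc 0 (2 * Real.pi), ‖g (circleMap 0 1 θ)‖ₑ := by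
        rw [circleIntegral, intervalIntegral.integral_of_le Real.two_pi_pos.le]
        simpa only [htangent] using enorm_integral_le_lintegral_enorm
          (fun θ ↦ deriv (circleMap 0 1) θ • g (circleMap 0 1 θ))
    _ = ∫⁻ τ, ‖g τ‖ₑ ∂arcLength := by
        rw [arcLength, lintegral_map' hg.enorm (measurable_circleMap 0 1).aemeasurable]

lemma norm_circAvg_le_of_lintegral_le {g : ℂ → ℂ} {B : ℝ} (hB : 0 ≤ B)
    (hg : AEStronglyMeasurable g arcLength)
    (hgB : ∫⁻ τ, ‖g τ‖ₑ ∂arcLength ≤ ENNReal.ofReal B) : ‖circAvg g‖ ≤ B := by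
  rw [← ENNReal.ofReal_le_ofReal_iff hB, ofReal_norm]
  exact (enorm_circAvg_le_lintegral hg).trans hgB

end ArcLength

section Kernel

variable {K : ℂ → ℂ → ℂ} {f : ℂ → ℂ} {α C M : ℝ} {w w₁ w₂ : ℂ}

/-- Kernels on the unit circle that are measurable off the diagonal and blow up there at most like
`C ‖w - τ‖ ^ (-α)`. -/
structure IsWeaklySingular (K : ℂ → ℂ → ℂ) (α C : ℝ) : Prop where
  measurable_domRestrict : Measurable (({p : ℂ × ℂ | ‖p.1‖ = 1 ∧ ‖p.2‖ = 1 ∧ p.1 ≠ p.2}).domRestrict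
    fun p : ℂ × ℂ ↦ K p.1 p.2)
  norm_le : ∀ w τ : ℂ, ‖w‖ = 1 → ‖τ‖ = 1 → w ≠ τ → ‖K w τ‖ ≤ C / ‖w - τ‖ ^ α

/-- Kernels on the unit circle whose derivative in the angle of the first variable exists off the
diagonal and is bounded by `C ‖w - τ‖ ^ (-β)`. -/
def HasAngularDerivBound (K : ℂ → ℂ → ℂ) (β C : ℝ) : Prop :=
  ∀ τ : ℂ, ‖τ‖ = 1 → ∀ θ : ℝ, circleMap 0 1 θ ≠ τ →
    ∃ d : ℂ, HasDerivAt (fun s : ℝ ↦ K (circleMap 0 1 s) τ) d θ ∧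
      ‖d‖ ≤ C / dist (circleMap 0 1 θ) τ ^ β

lemma IsWeaklySingular.aestronglyMeasurable (hK : IsWeaklySingular K α C) (hw : ‖w‖ = 1) :
    AEStronglyMeasurable (K w) arcLength := by
  set S : Set ℂ := {τ | ‖τ‖ = 1} ∩ {τ | w ≠ τ}
  have hS : MeasurableSet S := (measurableSet_eq_fun measurable_norm measurable_const).inter
    (measurableSet_eq_fun measurable_const measurable_id).compl
  have hSae : ∀ᵐ τ ∂arcLength, τ ∈ S :=
    ae_arcLength_norm_eq_one.and (ae_arcLength_ne w)
  rw [← Measure.restrict_eq_self_of_ae_mem hSae]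
  refine (aemeasurable_restrict_of_measurable_subtype hS ?_).aestronglyMeasurable
  have hsection : Measurable fun τ : S ↦ (⟨(w, τ), hw, τ.2.1, τ.2.2⟩ :
      {p : ℂ × ℂ | ‖p.1‖ = 1 ∧ ‖p.2‖ = 1 ∧ p.1 ≠ p.2}) :=
    (measurable_const.prodMk measurable_subtype_coe).subtype_mk
  exact hK.measurable_domRestrict.comp hsection

lemma IsWeaklySingular.ae_norm_mul_le (hK : IsWeaklySingular K α C)
    (hC : 0 ≤ C) (hf : ∀ᵐ τ ∂arcLength, ‖f τ‖ ≤ M) (hw : ‖w‖ = 1) :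
    ∀ᵐ τ ∂arcLength, ‖K w τ * f τ‖ ≤ C * M * dist w τ ^ (-α) := by
  filter_upwards [ae_arcLength_norm_eq_one, ae_arcLength_ne w, hf] with τ hτ hwτ hfτ
  calc ‖K w τ * f τ‖ ≤ C / ‖w - τ‖ ^ α * M := by
        rw [norm_mul]
        gcongr
        exact hK.norm_le w τ hw hτ hwτ
    _ = C * M * dist w τ ^ (-α) := by
        rw [dist_eq_norm, Real.rpow_neg (norm_nonneg _)]
        ring

lemma IsWeaklySingular.lintegral_enorm_mul_le (hK : IsWeaklySingular K α C) (hα₀ : 0 < α)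
    (hα₁ : α < 1) (hC : 0 ≤ C) (hM : 0 ≤ M) (hf : ∀ᵐ τ ∂arcLength, ‖f τ‖ ≤ M) (hw : ‖w‖ = 1) :
    ∫⁻ τ, ‖K w τ * f τ‖ₑ ∂arcLength ≤
      ENNReal.ofReal (C * M * annulusConst NNReal.pi 1 α (1 / 2)) := by
  have hball : ∀ᵐ τ ∂arcLength, τ ∈ closedBall w 2 := by
    filter_upwards [ae_arcLength_norm_eq_one] with τ hτ
    rw [mem_closedBall, dist_eq_norm]
    linarith [norm_sub_le τ w]
  rw [← Measure.restrict_eq_self_of_ae_mem hball]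
  simpa using (hasGrowthAt_arcLength hw).setLIntegral_closedBall_enorm_le hα₀ hα₁ two_pos
    (mul_nonneg hC hM) (hK.ae_norm_mul_le hC hf hw)

lemma HasAngularDerivBound.ae_norm_mul_sub_mul_le {β a b : ℝ} (hK : HasAngularDerivBound K β C)
    (hβ : 0 ≤ β) (hC : 0 ≤ C) (hf : ∀ᵐ τ ∂arcLength, ‖f τ‖ ≤ M) :
    ∀ᵐ τ ∂arcLength, 2 * |a - b| < dist (circleMap 0 1 a) τ →
      ‖K (circleMap 0 1 a) τ * f τ - K (circleMap 0 1 b) τ * f τ‖ ≤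
        2 ^ β * (C * M) * |a - b| * dist (circleMap 0 1 a) τ ^ (-β) := by
  filter_upwards [ae_arcLength_norm_eq_one, hf] with τ hτ hfτ hab
  have hne : circleMap 0 1 a ≠ τ := dist_pos.1 ((by positivity : 0 ≤ 2 * |a - b|).trans_lt hab)
  calc ‖K (circleMap 0 1 a) τ * f τ - K (circleMap 0 1 b) τ * f τ‖
      ≤ 2 ^ β * C * |a - b| * dist (circleMap 0 1 a) τ ^ (-β) * M := by
        rw [← sub_mul, norm_mul]
        gcongr
        exact norm_sub_le_of_deriv_le_dist_circleMap_rpow hC hβ (hK τ hτ) hne hab.le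
    _ = 2 ^ β * (C * M) * |a - b| * dist (circleMap 0 1 a) τ ^ (-β) := by ring

lemma IsWeaklySingular.integrable_mul (hK : IsWeaklySingular K α C) (hα₀ : 0 < α) (hα₁ : α < 1)
    (hC : 0 ≤ C) (hM : 0 ≤ M) (hfm : AEStronglyMeasurable f arcLength)
    (hf : ∀ᵐ τ ∂arcLength, ‖f τ‖ ≤ M) (hw : ‖w‖ = 1) :
    Integrable (fun τ ↦ K w τ * f τ) arcLength :=
  ⟨(hK.aestronglyMeasurable hw).mul hfm,
    (hK.lintegral_enorm_mul_le hα₀ hα₁ hC hM hf hw).trans_lt ENNReal.ofReal_lt_top⟩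

theorem IsWeaklySingular.norm_circAvg_mul_le (hK : IsWeaklySingular K α C) (hα₀ : 0 < α)
    (hα₁ : α < 1) (hC : 0 ≤ C) (hM : 0 ≤ M) (hfm : AEStronglyMeasurable f arcLength)
    (hf : ∀ᵐ τ ∂arcLength, ‖f τ‖ ≤ M) (hw : ‖w‖ = 1) :
    ‖circAvg fun τ ↦ K w τ * f τ‖ ≤ C * M * annulusConst NNReal.pi 1 α (1 / 2) := by
  have hN : 0 ≤ annulusConst NNReal.pi 1 α (1 / 2) :=
    annulusConst_nonneg (Real.rpow_le_one (by norm_num) (by norm_num) (sub_pos.2 hα₁).le)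
  exact norm_circAvg_le_of_lintegral_le (by positivity)
    (hK.integrable_mul hα₀ hα₁ hC hM hfm hf hw).aestronglyMeasurable
    (hK.lintegral_enorm_mul_le hα₀ hα₁ hC hM hf hw)

/-- The Hölder constant of `𝒯f` per unit of `C ‖f‖_∞`, with respect to the angle between two
points of the circle. -/
noncomputable def angularHolderConst (α : ℝ) : ℝ :=
  annulusConst NNReal.pi 1 α (1 / 2) * (1 + (3 / 2) ^ (1 - α)) +
    2 * annulusConst NNReal.pi 1 (1 + α) 2

lemma angularHolderConst_pos (hα₀ : 0 < α) (hα₁ : α < 1) : 0 < angularHolderConst α := by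
  have hN : 0 < annulusConst NNReal.pi 1 α (1 / 2) :=
    annulusConst_pos NNReal.pi_pos (Real.rpow_lt_one (by norm_num) (by norm_num) (sub_pos.2 hα₁))
  have hF : 0 < annulusConst NNReal.pi 1 (1 + α) 2 :=
    annulusConst_pos NNReal.pi_pos (Real.rpow_lt_one_of_one_lt_of_neg one_lt_two (by linarith))
  rw [angularHolderConst]
  positivity

lemma IsWeaklySingular.norm_circAvg_mul_sub_le_angle (hK : IsWeaklySingular K α C)
    (hK' : HasAngularDerivBound K (1 + α) C) (hα₀ : 0 < α) (hα₁ : α < 1) (hC : 0 ≤ C) (hM : 0 ≤ M)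
    (hfm : AEStronglyMeasurable f arcLength) (hf : ∀ᵐ τ ∂arcLength, ‖f τ‖ ≤ M) (a b : ℝ) :
    ‖circAvg (fun τ ↦ K (circleMap 0 1 a) τ * f τ) -
        circAvg (fun τ ↦ K (circleMap 0 1 b) τ * f τ)‖ ≤
      C * M * angularHolderConst α * |a - b| ^ (1 - α) := by
  have hH := (angularHolderConst_pos hα₀ hα₁).le
  rcases eq_or_ne a b with rfl | hab
  · rw [sub_self, norm_zero]
    positivity
  have hδ : 0 < |a - b| := abs_pos.2 (sub_ne_zero.2 hab)
  have hunit (θ : ℝ) : ‖circleMap 0 1 θ‖ = 1 := by simp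
  have hint (θ : ℝ) := hK.integrable_mul hα₀ hα₁ hC hM hfm hf (hunit θ)
  rw [← circAvg_sub (circleIntegrable_of_integrable_arcLength (hint a))
    (circleIntegrable_of_integrable_arcLength (hint b))]
  refine norm_circAvg_le_of_lintegral_le (by positivity)
    ((hint a).sub (hint b)).aestronglyMeasurable ?_
  refine ((hasGrowthAt_arcLength (hunit a)).lintegral_enorm_sub_le (hasGrowthAt_arcLength (hunit b))
    hα₀ hα₁ (by linarith) hδ (by simpa using dist_circleMap_le 0 1 a b)
    (by positivity) (by positivity) (hint a).aestronglyMeasurable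
    (hK.ae_norm_mul_le hC hf (hunit a)) (hK.ae_norm_mul_le hC hf (hunit b))
    (hK'.ae_norm_mul_sub_mul_le (by positivity) hC hf)).trans_eq (congrArg ENNReal.ofReal ?_)
  have hδpow : 2 ^ (1 + α) * |a - b| * (2 * |a - b|) ^ (1 - (1 + α)) = 2 * |a - b| ^ (1 - α) := by
    rw [sub_add_cancel_left, Real.mul_rpow zero_le_two hδ.le, sub_eq_add_neg 1 α,
      Real.rpow_add hδ, Real.rpow_add two_pos, Real.rpow_neg zero_le_two, Real.rpow_one,
      Real.rpow_one]
    field_simp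
  rw [angularHolderConst]
  linear_combination C * M * annulusConst NNReal.pi 1 (1 + α) 2 * hδpow

theorem IsWeaklySingular.norm_circAvg_mul_sub_le (hK : IsWeaklySingular K α C)
    (hK' : HasAngularDerivBound K (1 + α) C) (hα₀ : 0 < α) (hα₁ : α < 1) (hC : 0 ≤ C) (hM : 0 ≤ M)
    (hfm : AEStronglyMeasurable f arcLength) (hf : ∀ᵐ τ ∂arcLength, ‖f τ‖ ≤ M) (hw₁ : ‖w₁‖ = 1)
    (hw₂ : ‖w₂‖ = 1) :
    ‖circAvg (fun τ ↦ K w₁ τ * f τ) - circAvg (fun τ ↦ K w₂ τ * f τ)‖ ≤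
      C * M * (angularHolderConst α * (Real.pi / 2) ^ (1 - α)) * ‖w₁ - w₂‖ ^ (1 - α) := by
  obtain ⟨a, b, rfl, rfl, hab⟩ := exists_circleMap_eq_circleMap_eq 0 (R := 1) (w₁ := w₁) (w₂ := w₂)
    (by simpa using hw₁) (by simpa using hw₂)
  have hH := (angularHolderConst_pos hα₀ hα₁).le
  have hangle := abs_mul_abs_sub_le_dist_circleMap 0 1 hab
  rw [abs_one, one_mul, dist_eq_norm] at hangle
  refine (hK.norm_circAvg_mul_sub_le_angle hK' hα₀ hα₁ hC hM hfm hf a b).trans ?_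
  calc C * M * angularHolderConst α * |a - b| ^ (1 - α)
      ≤ C * M * angularHolderConst α *
          (Real.pi / 2 * ‖circleMap 0 1 a - circleMap 0 1 b‖) ^ (1 - α) := by
        gcongr
    _ = C * M * (angularHolderConst α * (Real.pi / 2) ^ (1 - α)) *
          ‖circleMap 0 1 a - circleMap 0 1 b‖ ^ (1 - α) := by
        rw [Real.mul_rpow (by positivity) (norm_nonneg _)]
        ring

end Kernel

theorem stmt0 (α : ℝ) (hα0 : 0 < α) (hα1 : α < 1) :
    ∃ Cα : ℝ, 0 < Cα ∧
      ∀ (C₀ : ℝ), 0 < C₀ → ∀ (K : ℂ → ℂ → ℂ),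
        Measurable (({p : ℂ × ℂ | ‖p.1‖ = 1 ∧ ‖p.2‖ = 1 ∧ p.1 ≠ p.2}).restrict
          fun p : ℂ × ℂ => K p.1 p.2) →
        (∀ w τ : ℂ, ‖w‖ = 1 → ‖τ‖ = 1 → w ≠ τ → ‖K w τ‖ ≤ C₀ / ‖w - τ‖ ^ α) →
        (∀ τ : ℂ, ‖τ‖ = 1 → ∀ θ : ℝ, Complex.exp (θ * Complex.I) ≠ τ →
          ∃ d : ℂ, HasDerivAt (fun s : ℝ => K (Complex.exp (s * Complex.I)) τ) d θ ∧
            ‖d‖ ≤ C₀ / ‖Complex.exp (θ * Complex.I) - τ‖ ^ (1 + α)) →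
        ∀ (f : ℂ → ℂ) (M : ℝ), Measurable f → (∀ τ : ℂ, ‖τ‖ = 1 → ‖f τ‖ ≤ M) →
          (∀ w : ℂ, ‖w‖ = 1 →
            ‖circAvg (fun τ => K w τ * f τ)‖ ≤ Cα * C₀ * M) ∧
          (∀ w₁ w₂ : ℂ, ‖w₁‖ = 1 → ‖w₂‖ = 1 →
            ‖circAvg (fun τ => K w₁ τ * f τ) - circAvg (fun τ => K w₂ τ * f τ)‖ ≤
              Cα * C₀ * M * ‖w₁ - w₂‖ ^ (1 - α)) := by
  set N := annulusConst NNReal.pi 1 α (1 / 2)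
  set H := angularHolderConst α * (Real.pi / 2) ^ (1 - α)
  have hH : 0 < H := mul_pos (angularHolderConst_pos hα0 hα1) (by positivity)
  refine ⟨max N H, lt_max_of_lt_right hH, fun C₀ hC₀ K hKm hKle hKd f M hfm hf ↦ ?_⟩
  have hM : 0 ≤ M := (norm_nonneg _).trans (hf 1 norm_one)
  have hK : IsWeaklySingular K α C₀ := ⟨hKm, hKle⟩
  have hK' : HasAngularDerivBound K (1 + α) C₀ := by
    simpa [HasAngularDerivBound, circleMap, dist_eq_norm] using hKd
  have hfm' := hfm.aestronglyMeasurable (μ := arcLength)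
  have hf' : ∀ᵐ τ ∂arcLength, ‖f τ‖ ≤ M := ae_arcLength_norm_eq_one.mono hf
  refine ⟨fun w hw ↦ ?_, fun w₁ w₂ hw₁ hw₂ ↦ ?_⟩
  · calc _ ≤ C₀ * M * N := hK.norm_circAvg_mul_le hα0 hα1 hC₀.le hM hfm' hf' hw
      _ ≤ C₀ * M * max N H := by gcongr; exact le_max_left N H
      _ = max N H * C₀ * M := by ring
  · calc _ ≤ C₀ * M * H * ‖w₁ - w₂‖ ^ (1 - α) :=
          hK.norm_circAvg_mul_sub_le hK' hα0 hα1 hC₀.le hM hfm' hf' hw₁ hw₂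
      _ ≤ C₀ * M * max N H * ‖w₁ - w₂‖ ^ (1 - α) := by gcongr; exact le_max_right N H
      _ = max N H * C₀ * M * ‖w₁ - w₂‖ ^ (1 - α) := by ring
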